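/- arXiv:1106.4273 — 3 statements merged into one kernel-verified Lean document; each statement's English description precedes it below -/
import Mathlib

section
/- Let μ denote the Haar probability measure on 2^ω and let E_I be the summable-difference equivalence relation on 2^ω. For every Borel set A ⊆ 2^ω with μ(A) > 0, E_I is Borel reducible to the restriction E_I ↾ A; in fact, there is a continuous map g : 2^ω → 2^ω such that g(x) ∈ A for every x ∈ 2^ω and, for all x, y ∈ 2^ω, x E_I y holds if and only if g(x) E_I g(y) holds. -/
open MeasureTheory
open scoped ENNReal

/-- The Cantor space `2^ω`, identified with the compact group `(ℤ/2ℤ)^ω`. -/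
abbrev Cantor : Type := ℕ → ZMod 2

/-- The sum `Σ_n |x(n) - y(n)|/(n+1)` (computed in `[0,∞]`). -/
noncomputable def eiSum (x y : Cantor) : ℝ≥0∞ :=
  ∑' n : ℕ, if x n = y n then 0 else 1 / ((n : ℝ≥0∞) + 1)

/-- The summable-difference equivalence relation `E_I`:
`x E_I y` iff `Σ_n |x(n)-y(n)|/(n+1) < ∞`. -/
def EI (x y : Cantor) : Prop := eiSum x y < ⊤


/-- weight sum on a block -/
noncomputable def bd (a b : ℕ) (u v : Cantor) : ℝ :=
  ∑ i ∈ Finset.Ico a b, if u i = v i then 0 else 1 / ((i : ℝ) + 1)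

def ee (i : ℕ) : Cantor := Pi.single i 1

noncomputable def Tav (i : ℕ) (F : Cantor → ℝ) : Cantor → ℝ :=
  fun x => (F x + F (x + ee i)) / 2

noncomputable def Eav (a : ℕ) : ℕ → (Cantor → ℝ) → Cantor → ℝ
  | 0, F => F
  | m + 1, F => Eav a m (Tav (a + m) F)

theorem Eav_lin (a m : ℕ) (F G : Cantor → ℝ) (α β : ℝ) (x : Cantor) :
    Eav a m (fun u => α * F u + β * G u) x = α * Eav a m F x + β * Eav a m G x := by
  induction m generalizing F G with
  | zero => rfl
  | succ m ih =>
    simp only [Eav]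
    rw [← ih]
    congr 1
    funext u
    simp only [Tav]; ring

theorem Eav_mono (a m : ℕ) (F G : Cantor → ℝ) (h : ∀ u, F u ≤ G u) (x : Cantor) :
    Eav a m F x ≤ Eav a m G x := by
  induction m generalizing F G with
  | zero => exact h x
  | succ m ih =>
    simp only [Eav]
    apply ih
    intro u
    simp only [Tav]
    linarith [h u, h (u + ee (a + m))]

theorem Eav_const (a m : ℕ) (c : ℝ) (x : Cantor) : Eav a m (fun _ => c) x = c := by
  induction m with
  | zero => rfl
  | succ m ih =>
    simp only [Eav]
    have : Tav (a + m) (fun _ => c) = fun _ => c := by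
      funext u; simp [Tav]
    rw [this, ih]

theorem Eav_shift (a m : ℕ) (F : Cantor → ℝ) (c x : Cantor) :
    Eav a m (fun u => F (u + c)) x = Eav a m F (x + c) := by
  induction m generalizing F with
  | zero => rfl
  | succ m ih =>
    simp only [Eav]
    rw [← ih]
    congr 1
    funext u
    simp only [Tav, add_right_comm]

theorem Eav_sum {ι : Type*} (a m : ℕ) (s : Finset ι) (F : ι → Cantor → ℝ) (x : Cantor) :
    Eav a m (fun u => ∑ j ∈ s, F j u) x = ∑ j ∈ s, Eav a m (F j) x := by
  classical
  induction s using Finset.induction_on with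
  | empty => simp [Eav_const]
  | insert j s hj ih =>
    simp only [Finset.sum_insert hj]
    have := Eav_lin a m (F j) (fun u => ∑ j ∈ s, F j u) 1 1 x
    simp only [one_mul] at this
    rw [this, ih]

theorem Eav_exists (a m : ℕ) (F : Cantor → ℝ) (x : Cantor) :
    ∃ u, F u ≤ Eav a m F x := by
  by_contra! h
  have h1 : ∀ m (F : Cantor → ℝ) (c : ℝ), (∀ u, c < F u) → c < Eav a m F x := by
    intro m
    induction m with
    | zero => intro F c h; exact h x
    | succ m ih =>
      intro F c h
      simp only [Eav]
      apply ih
      intro u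
      simp only [Tav]
      linarith [h u, h (u + ee (a + m))]
  exact lt_irrefl _ (h1 m F _ h)

theorem Eav_poincare (a m : ℕ) (F : Cantor → ℝ) (w : ℕ → ℝ)
    (h : ∀ i u, |F u - F (u + ee i)| ≤ w i) (x : Cantor) :
    Eav a m (fun u => F u ^ 2) x ≤ (Eav a m F x) ^ 2 + ∑ k ∈ Finset.range m, w (a + k) ^ 2 / 4 := by
  induction m generalizing F with
  | zero => simp [Eav]
  | succ m ih =>
    simp only [Eav]
    rw [Finset.sum_range_succ]
    have h1 : ∀ u, Tav (a + m) (fun u => F u ^ 2) u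
        ≤ 1 * (Tav (a + m) F u) ^ 2 + 1 * (w (a + m) ^ 2 / 4) := by
      intro u
      have h2 := sq_le_sq' (abs_le.1 (h (a + m) u)).1 (abs_le.1 (h (a + m) u)).2
      simp only [Tav]
      nlinarith
    have h3 := Eav_mono a m _ _ h1 x
    rw [Eav_lin a m (fun u => (Tav (a + m) F u) ^ 2) (fun _ => w (a + m) ^ 2 / 4) 1 1 x,
      Eav_const] at h3
    have h4 := ih (Tav (a + m) F) (by
      intro i u
      have e1 := abs_le.1 (h i u)
      have e2 := abs_le.1 (h i (u + ee (a + m)))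
      simp only [Tav]
      rw [add_right_comm u (ee i)]
      rw [abs_le]
      constructor <;> linarith [e1.1, e1.2, e2.1, e2.2])
    linarith

def glue (a : ℕ) (p u : Cantor) : Cantor := fun i => if i < a then p i else u i

theorem glue_ee (a k : ℕ) (p u : Cantor) :
    glue a p (u + ee (a + k)) = glue a p u + ee (a + k) := by
  funext i
  simp only [glue, Pi.add_apply]
  split_ifs with h
  · have : ee (a + k) i = 0 := by
      simp only [ee]; rw [Pi.single_eq_of_ne]; omega
    rw [this, add_zero]
  · rfl

structure Mart (φ : ℕ → Cantor → ℝ) : Prop where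
  mart : ∀ a x, φ a x = (φ (a + 1) x + φ (a + 1) (x + ee a)) / 2
  le_one : ∀ a x, φ a x ≤ 1
  pre : ∀ a x y, (∀ i < a, x i = y i) → φ a x = φ a y

theorem Eav_mart {φ : ℕ → Cantor → ℝ} (hφ : Mart φ) (a m : ℕ) (p x : Cantor) :
    Eav a m (fun u => φ (a + m) (glue a p u)) x = φ a p := by
  induction m with
  | zero =>
    exact hφ.pre _ _ _ (fun i hi => by simp only [glue, add_zero] at *; simp [hi])
  | succ m ih =>
    simp only [Eav]
    rw [← ih]
    congr 1
    funext u
    simp only [Tav]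
    rw [hφ.mart (a + m), glue_ee]
    rfl

theorem bd_nonneg (a b : ℕ) (u v : Cantor) : 0 ≤ bd a b u v := by
  apply Finset.sum_nonneg
  intro i _
  split_ifs <;> positivity

theorem bd_self (a b : ℕ) (u : Cantor) : bd a b u u = 0 := by simp [bd]

theorem bd_comm (a b : ℕ) (u v : Cantor) : bd a b u v = bd a b v u := by
  simp only [bd, eq_comm]

theorem bd_tri (a b : ℕ) (u v t : Cantor) : bd a b u t ≤ bd a b u v + bd a b v t := by
  simp only [bd]
  rw [← Finset.sum_add_distrib]
  apply Finset.sum_le_sum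
  intro i _
  have : (0 : ℝ) ≤ 1 / ((i : ℝ) + 1) := by positivity
  split_ifs <;> first | linarith | (exfalso; simp_all)

theorem bd_ee (a b i : ℕ) (u : Cantor) : bd a b u (u + ee i) ≤ 1 / ((i : ℝ) + 1) := by
  have h0 : (0 : ℝ) ≤ 1 / ((i : ℝ) + 1) := by positivity
  have : bd a b u (u + ee i) ≤ ∑ j ∈ Finset.Ico a b, if j = i then 1 / ((i : ℝ) + 1) else 0 := by
    apply Finset.sum_le_sum
    intro j _
    by_cases hj : j = i
    · subst hj
      simp only [if_true]
      split_ifs <;> linarith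
    · simp [ee, hj]
  refine this.trans ?_
  rw [Finset.sum_ite_eq']
  split_ifs <;> linarith

noncomputable def dd (φ : ℕ → Cantor → ℝ) (δ : ℝ) (a b : ℕ) (p u : Cantor) : ℝ :=
  ⨅ v : {v : Cantor // δ / 2 ≤ φ b (glue a p v)}, bd a b u v

theorem dd_bdd (φ : ℕ → Cantor → ℝ) (δ : ℝ) (a b : ℕ) (p u : Cantor) :
    BddBelow (Set.range fun v : {v : Cantor // δ / 2 ≤ φ b (glue a p v)} => bd a b u v) :=
  ⟨0, by rintro _ ⟨v, rfl⟩; exact bd_nonneg _ _ _ _⟩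

theorem dd_nonneg (φ : ℕ → Cantor → ℝ) (δ : ℝ) (a b : ℕ) (p u : Cantor) :
    0 ≤ dd φ δ a b p u := Real.iInf_nonneg fun _ => bd_nonneg _ _ _ _

theorem dd_nonempty {φ : ℕ → Cantor → ℝ} (hφ : Mart φ) {δ : ℝ} (hδ : 0 < δ) (a m : ℕ)
    (p : Cantor) (hp : δ ≤ φ a p) :
    Nonempty {v : Cantor // δ / 2 ≤ φ (a + m) (glue a p v)} := by
  by_contra! h
  have h1 := Eav_mono a m (fun u => φ (a + m) (glue a p u)) (fun _ => δ / 2) (by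
    intro u
    by_contra! h2
    exact h.false ⟨u, h2.le⟩) 0
  rw [Eav_mart hφ, Eav_const] at h1
  linarith

theorem dd_lip' {φ : ℕ → Cantor → ℝ} (hφ : Mart φ) {δ : ℝ} (hδ : 0 < δ) (a m : ℕ)
    (p : Cantor) (hp : δ ≤ φ a p) (u t : Cantor) :
    dd φ δ a (a + m) p u ≤ dd φ δ a (a + m) p t + bd a (a + m) u t := by
  have := dd_nonempty hφ hδ a m p hp
  rw [← sub_le_iff_le_add]
  apply le_ciInf
  intro v
  have h1 := ciInf_le (dd_bdd φ δ a (a + m) p u) v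
  have h2 := bd_tri a (a + m) u t v
  simp only [dd]
  linarith

theorem sumsq (a m : ℕ) (ha : 0 < a) :
    ∑ k ∈ Finset.range m, (1 / (((a + k : ℕ) : ℝ) + 1)) ^ 2 ≤ 1 / (a : ℝ) - 1 / ((a : ℝ) + m) := by
  have ha' : (0 : ℝ) < a := by exact_mod_cast ha
  induction m with
  | zero => simp
  | succ m ih =>
    rw [Finset.sum_range_succ]
    have : (1 / (((a + m : ℕ) : ℝ) + 1)) ^ 2 ≤ 1 / ((a : ℝ) + m) - 1 / ((a : ℝ) + (m + 1 : ℕ)) := by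
      push_cast
      have h1 : (0 : ℝ) < a + m := by positivity
      rw [div_sub_div _ _ (by positivity) (by positivity), div_pow,
        div_le_div_iff₀ (by positivity) (by positivity)]
      nlinarith
    linarith

theorem conc {φ : ℕ → Cantor → ℝ} (hφ : Mart φ) {δ : ℝ} (hδ : 0 < δ) (a m : ℕ) (ha : 0 < a)
    (p : Cantor) (hp : δ ≤ φ a p) (x : Cantor) :
    (Eav a m (dd φ δ a (a + m) p) x) ^ 2 ≤ 1 / (2 * δ * a) := by
  have hP := Eav_poincare a m (dd φ δ a (a + m) p) (fun i => 1 / ((i : ℝ) + 1)) (by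
    intro i u
    have h1 := dd_lip' hφ hδ a m p hp u (u + ee i)
    have h2 := dd_lip' hφ hδ a m p hp (u + ee i) u
    have h3 := bd_ee a (a + m) i u
    rw [bd_comm] at h2
    rw [abs_le]; constructor <;> linarith) x
  have ha' : (0 : ℝ) < a := by exact_mod_cast ha
  have hS : ∑ k ∈ Finset.range m, (1 / (((a + k : ℕ) : ℝ) + 1)) ^ 2 / 4 ≤ 1 / (a : ℝ) / 4 := by
    rw [← Finset.sum_div]
    have := sumsq a m ha
    have h0 : (0 : ℝ) ≤ 1 / ((a : ℝ) + m) := by positivity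
    linarith
  set M := Eav a m (dd φ δ a (a + m) p) x with hM
  have hpt : ∀ u, M ^ 2 * φ (a + m) (glue a p u) + (-(M ^ 2 * (δ / 2))) * 1 ≤
      1 * (dd φ δ a (a + m) p u) ^ 2 + 1 * ((-2 * M) * dd φ δ a (a + m) p u + M ^ 2 * 1) := by
    intro u
    by_cases hu : δ / 2 ≤ φ (a + m) (glue a p u)
    · have h1 : dd φ δ a (a + m) p u = 0 := by
        apply le_antisymm _ (dd_nonneg _ _ _ _ _ _)
        have := ciInf_le (dd_bdd φ δ a (a + m) p u) ⟨u, hu⟩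
        simp only [bd_self] at this
        exact this
      rw [h1]
      nlinarith [hφ.le_one (a + m) (glue a p u), sq_nonneg M]
    · nlinarith [sq_nonneg M, sq_nonneg (dd φ δ a (a + m) p u - M)]
  have h5 := Eav_mono a m _ _ hpt x
  rw [Eav_lin a m (fun u => φ (a + m) (glue a p u)) (fun _ => 1),
    Eav_lin a m (fun u => (dd φ δ a (a + m) p u) ^ 2)
      (fun u => (-2 * M) * dd φ δ a (a + m) p u + M ^ 2 * 1),
    Eav_lin a m (fun u => dd φ δ a (a + m) p u) (fun _ => 1), Eav_const, Eav_mart hφ] at h5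
  change _ ≤ 1 * _ + 1 * (-2 * M * M + _) at h5
  have h6 : M ^ 2 * (δ / 2) ≤ 1 / (a : ℝ) / 4 := by
    nlinarith [sq_nonneg M]
  have h7 : (1 / (a : ℝ) / 4) = (1 / (2 * δ * a)) * (δ / 2) := by
    field_simp; norm_num
  rw [h7] at h6
  exact le_of_mul_le_mul_right h6 (by positivity)

theorem step {φ : ℕ → Cantor → ℝ} (hφ : Mart φ) {δ : ℝ} (hδ : 0 < δ) (a m : ℕ) (ha : 0 < a)
    {ι : Type*} [Fintype ι] (p : ι → Cantor) (hp : ∀ s, δ ≤ φ a (p s)) (c : Cantor)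
    (η ε : ℝ) (hη : 0 ≤ η) (hη2 : 1 / (2 * δ * a) ≤ η ^ 2) (hε : 2 * Fintype.card ι * η < ε) :
    ∃ (z : Cantor) (p' : ι → ZMod 2 → Cantor), ∀ s k,
      δ / 2 ≤ φ (a + m) (p' s k) ∧ (∀ i < a, p' s k i = p s i) ∧
      bd a (a + m) (p' s k) (z + k • c) < ε := by
  have hE : ∀ s x, Eav a m (dd φ δ a (a + m) (p s)) x ≤ η := fun s x =>
    abs_le_of_sq_le_sq' ((conc hφ hδ a m ha (p s) (hp s) x).trans hη2) hη |>.2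
  obtain ⟨z, hz⟩ := Eav_exists a m (fun u => ∑ s : ι, (1 * dd φ δ a (a + m) (p s) u
    + 1 * dd φ δ a (a + m) (p s) (u + c))) 0
  rw [Eav_sum] at hz
  have hz2 : ∑ s : ι, (1 * dd φ δ a (a + m) (p s) z
    + 1 * dd φ δ a (a + m) (p s) (z + c)) < ε := by
    refine lt_of_le_of_lt (hz.trans (Finset.sum_le_sum (g := fun _ => 2 * η) ?_)) ?_
    · intro s _
      rw [Eav_lin a m _ (fun u => dd φ δ a (a + m) (p s) (u + c)), Eav_shift]
      linarith [hE s 0, hE s (0 + c)]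
    · simp only [Finset.sum_const, Finset.card_univ, nsmul_eq_mul]
      linarith
  have hd : ∀ s (k : ZMod 2), dd φ δ a (a + m) (p s) (z + k • c) < ε := by
    intro s k
    have h1 := Finset.single_le_sum (f := fun s => 1 * dd φ δ a (a + m) (p s) z
      + 1 * dd φ δ a (a + m) (p s) (z + c)) (fun t _ => by
        have := dd_nonneg φ δ a (a + m) (p t) z
        have := dd_nonneg φ δ a (a + m) (p t) (z + c)
        linarith) (Finset.mem_univ s)
    have := dd_nonneg φ δ a (a + m) (p s) z
    have := dd_nonneg φ δ a (a + m) (p s) (z + c)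
    have hk : k = 0 ∨ k = 1 := by revert k; decide
    rcases hk with rfl | rfl
    · rw [zero_smul, add_zero]; linarith
    · rw [one_smul]; linarith
  have hex : ∀ s (k : ZMod 2), ∃ q : Cantor, δ / 2 ≤ φ (a + m) q ∧ (∀ i < a, q i = p s i) ∧
      bd a (a + m) q (z + k • c) < ε := by
    intro s k
    have := dd_nonempty hφ hδ a m (p s) (hp s)
    obtain ⟨v, hv⟩ := exists_lt_of_ciInf_lt (hd s k)
    refine ⟨glue a (p s) v, v.2, fun i hi => by simp [glue, hi], ?_⟩
    rw [bd_comm] at hv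
    refine lt_of_le_of_lt (le_of_eq ?_) hv
    apply Finset.sum_congr rfl
    intro i hi
    have : ¬ i < a := by simp at hi; omega
    simp [glue, this]
  choose p' hp' using hex
  exact ⟨z, p', hp'⟩

theorem EI_iff (x y : Cantor) (b : ℕ → ℕ) (hb : Filter.Tendsto b Filter.atTop Filter.atTop) :
    EI x y ↔ ∃ C : ℝ, ∀ k, bd 0 (b k) x y ≤ C := by
  have h1 : eiSum x y = ⨆ k, ENNReal.ofReal (bd 0 (b k) x y) := by
    rw [eiSum, ENNReal.tsum_eq_iSup_nat' hb]
    congr 1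
    funext k
    rw [bd, ENNReal.ofReal_sum_of_nonneg (by intro i _; split_ifs <;> positivity),
      ← Finset.range_eq_Ico]
    apply Finset.sum_congr rfl
    intro i _
    split_ifs
    · simp
    · rw [ENNReal.ofReal_div_of_pos (by positivity), ENNReal.ofReal_one,
        ENNReal.ofReal_add (by positivity) (by positivity), ENNReal.ofReal_natCast,
        ENNReal.ofReal_one]
  rw [EI, h1]
  constructor
  · intro h
    refine ⟨(⨆ k, ENNReal.ofReal (bd 0 (b k) x y)).toReal, fun k => ?_⟩
    rw [← ENNReal.ofReal_le_iff_le_toReal h.ne]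
    exact le_iSup (fun k => ENNReal.ofReal (bd 0 (b k) x y)) k
  · rintro ⟨C, hC⟩
    refine lt_of_le_of_lt (iSup_le fun k => ENNReal.ofReal_le_ofReal (hC k)) ENNReal.ofReal_lt_top

def aa (N n : ℕ) : ℕ := (n + 1) * (N * 32 ^ n)

def cc (N n : ℕ) : Cantor := fun i => if i < aa N n + N * 32 ^ n then 1 else 0

theorem aa_succ (N n : ℕ) : aa N n + N * 32 ^ n ≤ aa N (n + 1) := by
  simp only [aa, pow_succ]
  nlinarith [Nat.zero_le (N * 32 ^ n), Nat.zero_le (n * (N * 32 ^ n))]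

theorem aa_mono (N : ℕ) : Monotone (aa N) :=
  monotone_nat_of_le_succ fun n => (Nat.le_add_right _ _).trans (aa_succ N n)

theorem aa_gt (N : ℕ) (hN : 0 < N) (n : ℕ) : n < aa N n := by
  have : 0 < N * 32 ^ n := by positivity
  simp only [aa]
  nlinarith

theorem block_ne (N : ℕ) (hN : 0 < N) (n : ℕ) (z : Cantor) (k l : ZMod 2) (hkl : k ≠ l) :
    1 / ((n : ℝ) + 1) / 2 ≤ bd (aa N n) (aa N (n + 1)) (z + k • cc N n) (z + l • cc N n) ∧
    bd (aa N n) (aa N (n + 1)) (z + k • cc N n) (z + l • cc N n) ≤ 1 / ((n : ℝ) + 1) := by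
  have h1 : bd (aa N n) (aa N (n + 1)) (z + k • cc N n) (z + l • cc N n) =
      ∑ i ∈ Finset.Ico (aa N n) (aa N n + N * 32 ^ n), 1 / ((i : ℝ) + 1) := by
    symm
    rw [bd]
    apply Finset.sum_subset_zero_on_sdiff
      (Finset.Ico_subset_Ico le_rfl (aa_succ N n))
    · intro i hi
      simp only [Finset.mem_sdiff, Finset.mem_Ico] at hi
      have : ¬ i < aa N n + N * 32 ^ n := by omega
      simp [cc, this]
    · intro i hi
      simp only [Finset.mem_Ico] at hi
      simp [cc, hi.2, hkl]
  rw [h1]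
  set L := N * 32 ^ n with hL
  have hL0 : 0 < L := by positivity
  have hL1 : (0 : ℝ) < L := by exact_mod_cast hL0
  have hA : ((aa N n : ℕ) : ℝ) = ((n : ℝ) + 1) * L := by
    simp only [aa]; push_cast [hL]; ring
  have hcard : (Finset.Ico (aa N n) (aa N n + L)).card = L := by simp
  have hn : (0 : ℝ) < (n : ℝ) + 1 := by positivity
  constructor
  · have := Finset.card_nsmul_le_sum (Finset.Ico (aa N n) (aa N n + L))
      (fun i => 1 / ((i : ℝ) + 1)) (1 / (2 * (((n : ℝ) + 1) * L))) (by
        intro i hi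
        simp only [Finset.mem_Ico] at hi
        apply one_div_le_one_div_of_le (by positivity)
        have h2 : i + 1 ≤ aa N n + L := hi.2
        have h3 : (i : ℝ) + 1 ≤ aa N n + L := by exact_mod_cast h2
        rw [hA] at h3
        nlinarith [(Nat.cast_nonneg n : (0 : ℝ) ≤ n)])
    rw [hcard, nsmul_eq_mul] at this
    refine le_trans (le_of_eq ?_) this
    field_simp
  · have := Finset.sum_le_card_nsmul (Finset.Ico (aa N n) (aa N n + L))
      (fun i => 1 / ((i : ℝ) + 1)) (1 / ((((n : ℝ) + 1) * L))) (by
        intro i hi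
        simp only [Finset.mem_Ico] at hi
        apply one_div_le_one_div_of_le (by positivity)
        have h3 : (aa N n : ℝ) ≤ i := by exact_mod_cast hi.1
        rw [hA] at h3
        linarith)
    rw [hcard, nsmul_eq_mul] at this
    refine this.trans (le_of_eq ?_)
    field_simp

theorem bd_split (a b c : ℕ) (hab : a ≤ b) (hbc : b ≤ c) (u v : Cantor) :
    bd a c u v = bd a b u v + bd b c u v := by
  simp only [bd]
  rw [Finset.sum_Ico_consecutive _ hab hbc]

theorem bd_congr (a b : ℕ) (u v u' v' : Cantor) (hu : ∀ i < b, u i = u' i)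
    (hv : ∀ i < b, v i = v' i) : bd a b u v = bd a b u' v' := by
  apply Finset.sum_congr rfl
  intro i hi
  simp only [Finset.mem_Ico] at hi
  rw [hu i hi.2, hv i hi.2]

def EInv (φ : ℕ → Cantor → ℝ) (δ : ℝ) (N n : ℕ) (P : Cantor → Cantor) : Prop :=
  (∀ x, δ / 2 ^ n ≤ φ (aa N n) (P x)) ∧ (∀ x y, (∀ i < n, x i = y i) → P x = P y)

def ERel (N n : ℕ) (P P' : Cantor → Cantor) : Prop :=
  (∀ x, ∀ i < aa N n, P' x i = P x i) ∧
  ∃ z : Cantor, ∀ x, bd (aa N n) (aa N (n + 1)) (P' x) (z + x n • cc N n) < (1 / 2) ^ n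

theorem next {φ : ℕ → Cantor → ℝ} (hφ : Mart φ) {δ : ℝ} (hδ : 0 < δ) (N : ℕ) (hN : 8 ≤ δ * N)
    (n : ℕ) (P : Cantor → Cantor) (hP : EInv φ δ N n P) :
    ∃ P', EInv φ δ N (n + 1) P' ∧ ERel N n P P' := by
  have hN0 : 0 < N := by
    rcases Nat.eq_zero_or_pos N with rfl | h
    · norm_num at hN
    · exact h
  have hN1 : (0 : ℝ) < N := by exact_mod_cast hN0
  let ex : (Fin n → ZMod 2) → Cantor := fun s i => if h : i < n then s ⟨i, h⟩ else 0
  obtain ⟨m, hm⟩ := Nat.exists_eq_add_of_le (aa_mono N (Nat.le_succ n))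
  have hm' : aa N (n + 1) = aa N n + m := hm
  obtain ⟨z, p', h⟩ := step hφ (δ := δ / 2 ^ n) (by positivity) (aa N n) m
    ((Nat.zero_le n).trans_lt (aa_gt N hN0 n)) (fun s => P (ex s)) (fun s => hP.1 _) (cc N n)
    ((1 / 4) ^ n / 4) ((1 / 2) ^ n) (by positivity)
    (by
      have hA : ((aa N n : ℕ) : ℝ) = ((n : ℝ) + 1) * (N * 32 ^ n) := by
        simp only [aa]; push_cast; ring
      rw [hA]
      have e1 : (((1 : ℝ) / 4) ^ n / 4) ^ 2 = 1 / (16 * 16 ^ n) := by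
        have e0 : (16 : ℝ) ^ n = 4 ^ n * 4 ^ n := by rw [← mul_pow]; norm_num
        rw [e0, one_div_pow]
        field_simp
        norm_num
      rw [e1]
      apply one_div_le_one_div_of_le (by positivity)
      have e2 : (32 : ℝ) ^ n = 2 ^ n * 16 ^ n := by rw [← mul_pow]; norm_num
      have e3 : 2 * (δ / 2 ^ n) * (((n : ℝ) + 1) * (N * 32 ^ n)) =
          2 * (δ * N) * ((n : ℝ) + 1) * 16 ^ n := by
        rw [e2]; field_simp
      rw [e3]
      apply mul_le_mul_of_nonneg_right _ (by positivity)
      nlinarith [(Nat.cast_nonneg n : (0 : ℝ) ≤ n)])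
    (by
      have e1 : ((Fintype.card (Fin n → ZMod 2) : ℕ) : ℝ) = 2 ^ n := by
        simp [ZMod.card]
      rw [e1]
      have e2 : (2 : ℝ) ^ n * (1 / 4) ^ n = (1 / 2) ^ n := by
        rw [← mul_pow]; norm_num
      have e3 : (0 : ℝ) < (1 / 2) ^ n := by positivity
      nlinarith)
  have hex : ∀ x : Cantor, P (ex fun i => x i) = P x := by
    intro x
    apply hP.2
    intro i hi
    simp [ex, hi]
  refine ⟨fun x => p' (fun i => x i) (x n), ⟨?_, ?_⟩, ?_, z, ?_⟩
  · intro x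
    have := (h (fun i => x i) (x n)).1
    rw [hm']
    refine le_trans (le_of_eq ?_) this
    rw [pow_succ]; field_simp
  · intro x y hxy
    have : (fun i : Fin n => x i) = fun i : Fin n => y i := by
      funext i; exact hxy i (by omega)
    simp only [this, hxy n (Nat.lt_succ_self n)]
  · intro x i hi
    refine ((h (fun i => x i) (x n)).2.1 i hi).trans ?_
    rw [hex]
  · intro x
    rw [hm']
    exact (h (fun i => x i) (x n)).2.2

theorem exists_seq {φ : ℕ → Cantor → ℝ} (hφ : Mart φ) {δ : ℝ} (hδ : 0 < δ) (N : ℕ)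
    (hN : 8 ≤ δ * N) (hδφ : ∀ x, φ 0 x = δ) :
    ∃ P : ℕ → Cantor → Cantor, ∀ n, EInv φ δ N n (P n) ∧ ERel N n (P n) (P (n + 1)) := by
  have h0 : ∃ P, EInv φ δ N 0 P := by
    by_contra! h
    have h1 : ∀ u, φ (aa N 0) u < δ := by
      intro u
      by_contra! h2
      exact h (fun _ => u) ⟨fun _ => by simpa using h2, fun _ _ _ => rfl⟩
    obtain ⟨u, hu⟩ := Eav_exists 0 (aa N 0) (fun u => (-1) * φ (0 + aa N 0) (glue 0 0 u) + 0 * 0) 0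
    rw [Eav_lin 0 (aa N 0) (fun u => φ (0 + aa N 0) (glue 0 0 u)) (fun _ => 0), Eav_mart hφ,
      hδφ] at hu
    have := h1 (glue 0 0 u)
    rw [Nat.zero_add] at hu
    linarith
  obtain ⟨P0, hP0⟩ := h0
  choose! f hf using next hφ hδ N hN
  let P : ℕ → Cantor → Cantor := fun n => Nat.rec P0 (fun n Q => f n Q) n
  have hI : ∀ n, EInv φ δ N n (P n) := by
    intro n
    induction n with
    | zero => exact hP0
    | succ n ih => exact (hf n (P n) ih).1
  exact ⟨P, fun n => ⟨hI n, (hf n (P n) (hI n)).2⟩⟩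

theorem comb {φ : ℕ → Cantor → ℝ} (hφ : Mart φ) {δ : ℝ} (hδ : 0 < δ) (hδφ : ∀ x, φ 0 x = δ) :
    ∃ g : Cantor → Cantor, Continuous g ∧ (∀ x n, ∃ m, n ≤ m ∧ 0 < φ m (g x)) ∧
      (∀ x y : Cantor, EI x y ↔ EI (g x) (g y)) := by
  obtain ⟨N, hN⟩ := exists_nat_ge (8 / δ)
  rw [div_le_iff₀ hδ, mul_comm] at hN
  have hN0 : 0 < N := by
    rcases Nat.eq_zero_or_pos N with rfl | h
    · norm_num at hN
    · exact h
  obtain ⟨P, hP⟩ := exists_seq hφ hδ N hN hδφ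
  have hst : ∀ n k x, ∀ i < aa N n, P (n + k) x i = P n x i := by
    intro n k x i hi
    induction k with
    | zero => rfl
    | succ k ih =>
      rw [← ih]
      exact (hP (n + k)).2.1 x i (hi.trans_le (aa_mono N (Nat.le_add_right _ _)))
  let g : Cantor → Cantor := fun x i => P i x i
  have hg : ∀ n x, ∀ i < aa N n, g x i = P n x i := by
    intro n x i hi
    rcases le_total n i with h | h
    · obtain ⟨k, hk⟩ := Nat.exists_eq_add_of_le h
      have := hst n k x i hi
      rw [← hk] at this
      exact this
    · obtain ⟨k, hk⟩ := Nat.exists_eq_add_of_le h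
      have := hst i k x i (aa_gt N hN0 i)
      rw [← hk] at this
      exact this.symm
  refine ⟨g, ?_, ?_, ?_⟩
  · apply continuous_pi
    intro i
    have : IsLocallyConstant (fun x => g x i) := by
      rw [IsLocallyConstant.iff_exists_open]
      intro x
      refine ⟨{y | ∀ j ∈ Finset.range i, y j = x j}, ?_, fun j _ => rfl, ?_⟩
      · have : {y : Cantor | ∀ j ∈ Finset.range i, y j = x j}
            = ⋂ j ∈ Finset.range i, {y : Cantor | y j = x j} := by
          ext y; simp
        rw [this]
        apply isOpen_biInter_finset
        intro j _
        have hc : Continuous fun y : Cantor => y j := continuous_apply j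
        exact hc.isOpen_preimage {x j} (isOpen_discrete _)
      · intro y hy
        show P i y i = P i x i
        rw [(hP i).1.2 y x (fun j hj => hy j (Finset.mem_range.2 hj))]
    exact this.continuous
  · intro x n
    refine ⟨aa N n, (aa_gt N hN0 n).le, ?_⟩
    rw [hφ.pre _ _ _ (hg n x)]
    exact lt_of_lt_of_le (by positivity) ((hP n).1.1 x)
  · intro x y
    have hta : Filter.Tendsto (aa N) Filter.atTop Filter.atTop :=
      Filter.tendsto_atTop_mono (fun n => (aa_gt N hN0 n).le) Filter.tendsto_id
    rw [EI_iff x y id Filter.tendsto_id, EI_iff (g x) (g y) (aa N) hta]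
    -- termwise comparison
    have hterm : ∀ n, bd (aa N n) (aa N (n + 1)) (g x) (g y) ≤ bd n (n + 1) x y + 2 * (1 / 2) ^ n ∧
        bd n (n + 1) x y ≤ 2 * bd (aa N n) (aa N (n + 1)) (g x) (g y) + 4 * (1 / 2) ^ n := by
      intro n
      obtain ⟨z, hz⟩ := (hP n).2.2
      rw [bd_congr _ _ (g x) (g y) _ _ (hg (n + 1) x) (hg (n + 1) y)]
      have hx := hz x
      have hy := hz y
      have t1 := bd_tri (aa N n) (aa N (n + 1)) (P (n + 1) x) (z + x n • cc N n) (P (n + 1) y)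
      have t2 := bd_tri (aa N n) (aa N (n + 1)) (z + x n • cc N n) (z + y n • cc N n) (P (n + 1) y)
      have t3 := bd_tri (aa N n) (aa N (n + 1)) (z + x n • cc N n) (P (n + 1) x) (z + y n • cc N n)
      have t4 := bd_tri (aa N n) (aa N (n + 1)) (P (n + 1) x) (P (n + 1) y) (z + y n • cc N n)
      rw [bd_comm _ _ (z + y n • cc N n) (P (n + 1) y)] at t2
      rw [bd_comm _ _ (z + x n • cc N n) (P (n + 1) x)] at t3
      have hs : bd n (n + 1) x y = if x n = y n then 0 else 1 / ((n : ℝ) + 1) := by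
        simp [bd]
      rw [hs]
      by_cases hxy : x n = y n
      · rw [if_pos hxy]
        rw [hxy, bd_self] at t2
        have := bd_nonneg (aa N n) (aa N (n + 1)) (P (n + 1) x) (P (n + 1) y)
        rw [hxy] at t1 hx
        constructor
        · linarith
        · positivity
      · rw [if_neg hxy]
        obtain ⟨b1, b2⟩ := block_ne N hN0 n z _ _ hxy
        constructor <;> linarith
    have hgeo : ∀ K, ∑ n ∈ Finset.range K, ((1 : ℝ) / 2) ^ n ≤ 2 := sum_geometric_two_le
    have hs1 : ∀ K, bd 0 K x y = ∑ n ∈ Finset.range K, bd n (n + 1) x y := by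
      intro K
      induction K with
      | zero => simp [bd]
      | succ K ih => rw [Finset.sum_range_succ, ← ih, bd_split 0 K (K + 1) (by omega) (by omega)]
    have hs2 : ∀ K, bd 0 (aa N K) (g x) (g y) = bd 0 (aa N 0) (g x) (g y) +
        ∑ n ∈ Finset.range K, bd (aa N n) (aa N (n + 1)) (g x) (g y) := by
      intro K
      induction K with
      | zero => simp
      | succ K ih =>
        rw [Finset.sum_range_succ, ← add_assoc, ← ih,
          bd_split 0 (aa N K) (aa N (K + 1)) (by omega) (aa_mono N (Nat.le_succ K))]
    constructor
    · rintro ⟨C, hC⟩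
      refine ⟨bd 0 (aa N 0) (g x) (g y) + C + 4, fun K => ?_⟩
      have h1 := Finset.sum_le_sum fun n (_ : n ∈ Finset.range K) => (hterm n).1
      rw [Finset.sum_add_distrib, ← Finset.mul_sum, ← hs1] at h1
      rw [hs2]
      have h2 := hC K
      simp only [id] at h2
      linarith [hgeo K]
    · rintro ⟨C, hC⟩
      refine ⟨2 * C + 8, fun K => ?_⟩
      have h1 := Finset.sum_le_sum fun n (_ : n ∈ Finset.range K) => (hterm n).2
      rw [Finset.sum_add_distrib, ← Finset.mul_sum, ← Finset.mul_sum, ← hs1] at h1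
      have h2 := hC K
      rw [hs2] at h2
      have := bd_nonneg 0 (aa N 0) (g x) (g y)
      simp only [id]
      linarith [hgeo K]

def cone (a : ℕ) (x : Cantor) : Set Cantor := {y | ∀ i ∈ Finset.range a, y i = x i}

theorem isOpen_cone (a : ℕ) (x : Cantor) : IsOpen (cone a x) := by
  have : cone a x = ⋂ j ∈ Finset.range a, {y : Cantor | y j = x j} := by
    ext y; simp [cone]
  rw [this]
  apply isOpen_biInter_finset
  intro j _
  have hc : Continuous fun y : Cantor => y j := continuous_apply j
  exact hc.isOpen_preimage {x j} (isOpen_discrete _)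

theorem ee_self (a : ℕ) : ee a a = 1 := by simp [ee]
theorem ee_ne (a i : ℕ) (h : i ≠ a) : ee a i = 0 := by simp [ee, h]

theorem cone_split (a : ℕ) (x : Cantor) : cone a x = cone (a + 1) x ∪ cone (a + 1) (x + ee a) := by
  ext y
  simp only [cone, Set.mem_union, Set.mem_ofPred_eq, Finset.mem_range]
  constructor
  · intro h
    have hk : ∀ k l : ZMod 2, k = l ∨ k = l + 1 := by decide
    rcases hk (y a) (x a) with h1 | h1
    · left
      intro i hi
      rcases Nat.lt_succ_iff_lt_or_eq.1 hi with h2 | rfl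
      · exact h i h2
      · exact h1
    · right
      intro i hi
      rcases Nat.lt_succ_iff_lt_or_eq.1 hi with h2 | rfl
      · rw [Pi.add_apply, ee_ne a i h2.ne, add_zero]; exact h i h2
      · rw [Pi.add_apply, ee_self]; exact h1
  · rintro (h | h) i hi
    · exact h i (by omega)
    · have := h i (by omega)
      rwa [Pi.add_apply, ee_ne a i hi.ne, add_zero] at this

theorem cone_disj (a : ℕ) (x : Cantor) : Disjoint (cone (a + 1) x) (cone (a + 1) (x + ee a)) := by
  rw [Set.disjoint_left]
  intro y h1 h2
  have e1 := h1 a (by simp)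
  have e2 := h2 a (by simp)
  rw [e1, Pi.add_apply, ee_self] at e2
  have hk : ∀ k : ZMod 2, k ≠ k + 1 := by decide
  exact hk _ e2

theorem cone_meas (μ : Measure Cantor) [μ.IsAddHaarMeasure] [IsProbabilityMeasure μ]
    (a : ℕ) (x : Cantor) : 2 ^ a * μ.real (cone a x) = 1 := by
  induction a generalizing x with
  | zero =>
    have : cone 0 x = Set.univ := by ext y; simp [cone]
    simp [this]
  | succ a ih =>
    have h1 : μ.real (cone (a + 1) (x + ee a)) = μ.real (cone (a + 1) x) := by
      have h2 := measure_preimage_add μ (ee a) (cone (a + 1) (x + ee a))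
      have h3 : (fun h => ee a + h) ⁻¹' (cone (a + 1) (x + ee a)) = cone (a + 1) x := by
        ext y
        simp only [cone, Set.mem_preimage, Set.mem_ofPred_eq, Pi.add_apply]
        refine forall₂_congr fun i _ => ?_
        rw [add_comm, add_left_inj]
      rw [h3] at h2
      simp only [Measure.real, h2]
    have h4 := ih x
    rw [cone_split, measureReal_union (cone_disj a x) (isOpen_cone _ _).measurableSet, h1] at h4
    rw [pow_succ]; linarith

/-- For every Borel set `A ⊆ 2^ω` of positive Haar measure, `E_I` is (continuously, hence
Borel) reducible to `E_I ↾ A`: there is a continuous `g : 2^ω → 2^ω` taking values in `A`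
with `x E_I y ↔ g(x) E_I g(y)`. -/
theorem ei_reducible_to_restriction_of_pos_measure
    (μ : Measure Cantor) (hHaar : μ.IsAddHaarMeasure) (hprob : IsProbabilityMeasure μ)
    (A : Set Cantor) (hA : MeasurableSet A) (hpos : 0 < μ A) :
    ∃ g : Cantor → Cantor, Continuous g ∧ (∀ x, g x ∈ A) ∧
      (∀ x y : Cantor, EI x y ↔ EI (g x) (g y)) := by
  obtain ⟨K, hKA, hK, hKpos⟩ := hA.exists_lt_isCompact hpos
  have hKr : 0 < μ.real K := ENNReal.toReal_pos hKpos.ne' (measure_ne_top _ _)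
  let φ : ℕ → Cantor → ℝ := fun a x => 2 ^ a * μ.real (K ∩ cone a x)
  have hφ : Mart φ := by
    refine ⟨?_, ?_, ?_⟩
    · intro a x
      simp only [φ]
      rw [cone_split a x, Set.inter_union_distrib_left,
        measureReal_union ((cone_disj a x).mono Set.inter_subset_right Set.inter_subset_right)
        (hK.measurableSet.inter (isOpen_cone _ _).measurableSet), pow_succ]
      ring
    · intro a x
      rw [← cone_meas μ a x]
      exact mul_le_mul_of_nonneg_left (measureReal_mono Set.inter_subset_right) (by positivity)
    · intro a x y h
      have : cone a x = cone a y := by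
        ext t
        simp only [cone, Set.mem_ofPred_eq, Finset.mem_range]
        refine forall₂_congr fun i hi => ?_
        rw [h i hi]
      simp only [φ, this]
  obtain ⟨g, hgc, hgφ, hgE⟩ := comb hφ hKr (fun x => by
    have : cone 0 x = Set.univ := by ext y; simp [cone]
    simp [φ, this])
  refine ⟨g, hgc, fun x => hKA ?_, hgE⟩
  rw [← hK.isClosed.closure_eq]
  have hex : ∀ n, ∃ y ∈ K, ∀ i < n, y i = g x i := by
    intro n
    obtain ⟨m, hnm, hm⟩ := hgφ x n
    have : (K ∩ cone m (g x)).Nonempty := by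
      rw [Set.nonempty_iff_ne_empty]
      intro h
      simp [φ, h] at hm
    obtain ⟨y, hy, hy2⟩ := this
    exact ⟨y, hy, fun i hi => hy2 i (Finset.mem_range.2 (hi.trans_le hnm))⟩
  choose y hy hy2 using hex
  refine mem_closure_of_tendsto (f := y) (b := Filter.atTop) ?_ (Filter.Eventually.of_forall hy)
  rw [tendsto_pi_nhds]
  intro i
  apply tendsto_const_nhds.congr'
  filter_upwards [Filter.eventually_gt_atTop i] with n hn
  exact (hy2 n i hn).symm
end

section
/- Let μ denote the Haar probability measure on 2^ω. For every closed set A ⊆ 2^ω with μ(A) > 0 there exist q_n ∈ ℕ and finite binary strings s_{n,i} (n ∈ ℕ, i ∈ {0,1}) and s_t (t ∈ 2^{<ω}) satisfying: (1) q_0 = 0 and, for every n, q_{n+1} equals the common length of s_t for t ∈ 2^n; (2) s_{0,0} = s_{0,1} = ∅ and, for n > 0, s_{n,0} and s_{n,1} have equal positive length; (3) s_∅ = ∅ and s_{t⌢i} = s_t ⌢ s_{lh(t)+1, i} for all t and i; (4) for every n, 1/(n+1) ≤ Σ_{k < lh(s_{n+1,0})} |s_{n+1,0}(k) − s_{n+1,1}(k)|/(q_{n+1}+k+1)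 ≤ 2/(n+1); (5) N_{s_t} ∩ A is nonempty and N_{s_t} ⊆ A is witnessed at the level of localizations, namely (6) for every t ∈ 2^n, μ(A_{(s_t)}) > 1 − 2^{−n}, where A_{(s)} = {x ∈ 2^ω : s⌢x ∈ A}. -/
open MeasureTheory
open scoped ENNReal

/-- The basic clopen cylinder `N_s = {x ∈ 2^ω : s ⊆ x}`. -/
def cyl (s : List (ZMod 2)) : Set Cantor :=
  {x | ∀ i : ℕ, i < s.length → x i = s.getD i 0}

/-- Concatenation `s⌢x` of a finite string with an infinite sequence. -/
def concat (s : List (ZMod 2)) (x : Cantor) : Cantor :=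
  fun n => if n < s.length then s.getD n 0 else x (n - s.length)

/-- The localization `A_{(s)} = {x ∈ 2^ω : s⌢x ∈ A}` of `A` at `s`. -/
def localization (A : Set Cantor) (s : List (ZMod 2)) : Set Cantor :=
  {x | concat s x ∈ A}

lemma continuous_concat (s : List (ZMod 2)) : Continuous (concat s) := by
  refine continuous_pi fun n => ?_
  unfold concat
  by_cases h : n < s.length
  · simp only [h, if_true]; exact continuous_const
  · simp only [h, if_false]; exact continuous_apply _

lemma isClosed_localization {A : Set Cantor} (hA : IsClosed A) (s : List (ZMod 2)) :
    IsClosed (localization A s) := hA.preimage (continuous_concat s)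

lemma concat_append (s t : List (ZMod 2)) (x : Cantor) :
    concat (s ++ t) x = concat s (concat t x) := by
  funext n
  simp only [concat, List.length_append, List.getD_eq_getElem?_getD, List.getElem?_append]
  by_cases h : n < s.length
  · have : n < s.length + t.length := by omega
    simp [h, this]
  · by_cases h2 : n < s.length + t.length
    · have : n - s.length < t.length := by omega
      simp [h, h2, this]
    · have : ¬ n - s.length < t.length := by omega
      simp [h, h2, this, Nat.sub_sub]

lemma localization_append (A : Set Cantor) (s t : List (ZMod 2)) :
    localization A (s ++ t) = localization (localization A s) t := by
  ext x; simp [localization, concat_append]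

lemma measurableSet_cyl (s : List (ZMod 2)) : MeasurableSet (cyl s) := by
  have : cyl s = ⋂ i : ℕ, ⋂ _ : i < s.length, (fun x : Cantor => x i) ⁻¹' {s.getD i 0} := by
    ext x; simp [cyl]
  rw [this]
  refine MeasurableSet.iInter fun i => MeasurableSet.iInter fun _ => ?_
  exact measurable_pi_apply i (MeasurableSet.singleton _)

/-- the shift -/
def shiftC (m : ℕ) (x : Cantor) : Cantor := fun n => x (n + m)

lemma measurable_shiftC (m : ℕ) : Measurable (shiftC m) :=
  measurable_pi_lambda _ fun n => measurable_pi_apply (n + m)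

lemma measure_cyl_inter (μ : Measure Cantor) (hHaar : μ.IsAddHaarMeasure)
    (hprob : IsProbabilityMeasure μ) (A : Set Cantor) (hA : MeasurableSet A)
    (s : List (ZMod 2)) : μ (cyl s ∩ A) = μ (cyl s) * μ (localization A s) := by
  let ρ : Measure Cantor := (μ.restrict (cyl s)).map (shiftC s.length)
  have hρ : ∀ E, MeasurableSet E → ρ E = μ (cyl s ∩ shiftC s.length ⁻¹' E) := by
    intro E hE
    rw [Measure.map_apply (measurable_shiftC _) hE,
      Measure.restrict_apply (measurable_shiftC _ hE), Set.inter_comm]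
  have hfin : IsFiniteMeasure ρ := by
    dsimp only [ρ]; infer_instance
  have hinv : ρ.IsAddLeftInvariant := by
    refine ⟨fun g => ?_⟩
    ext E hE
    have hm : Measurable (fun x : Cantor => g + x) := measurable_const_add g
    rw [Measure.map_apply hm hE, hρ _ (hm hE), hρ _ hE]
    let g' : Cantor := fun n => if n < s.length then 0 else g (n - s.length)
    rw [← measure_preimage_add μ g' (cyl s ∩ shiftC s.length ⁻¹' E)]
    congr 1
    ext x
    have h1 : shiftC s.length (g' + x) = g + shiftC s.length x := by
      funext n
      simp [shiftC, g']
    have h2 : g' + x ∈ cyl s ↔ x ∈ cyl s := by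
      simp only [cyl, Set.mem_ofPred_eq]
      refine forall_congr' fun i => forall_congr' fun hi => ?_
      simp [g', hi]
    simp only [Set.mem_inter_iff, Set.mem_preimage, h1, h2]
  have key := Measure.isAddInvariant_eq_smul_of_compactSpace ρ μ
  have hL : MeasurableSet (localization A s) := (continuous_concat s).measurable hA
  have h1 : ρ Set.univ = μ (cyl s) := by rw [hρ _ MeasurableSet.univ]; simp
  have h2 : ρ (localization A s) = μ (cyl s ∩ A) := by
    rw [hρ _ hL]
    congr 1
    ext x
    simp only [Set.mem_inter_iff, Set.mem_preimage, localization, Set.mem_ofPred_eq]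
    refine and_congr_right fun hx => ?_
    have : concat s (shiftC s.length x) = x := by
      funext n
      by_cases h : n < s.length
      · simp [concat, h]; rw [hx n h]; simp [h]
      · have : n - s.length + s.length = n := by omega
        simp [concat, h, shiftC, this]
    rw [this]
  rw [← h1, ← h2, key]
  simp

lemma mem_cyl_ofFn {m : ℕ} (a : Fin m → ZMod 2) (x : Cantor) :
    x ∈ cyl (List.ofFn a) ↔ (fun i : Fin m => x i) = a := by
  constructor
  · intro h
    funext i
    have := h i (by simp)
    simpa using this
  · rintro rfl i hi
    have : i < m := by simpa using hi
    simp [this]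

lemma density (μ : Measure Cantor) (hHaar : μ.IsAddHaarMeasure)
    (hprob : IsProbabilityMeasure μ) (C : Set Cantor) (hC : IsClosed C) (hpos : 0 < μ C)
    (r : ℝ≥0∞) (hr : r < 1) (M : ℕ) :
    ∃ v : List (ZMod 2), M ≤ v.length ∧ r < μ (localization C v) := by
  classical
  by_contra! hcon
  let E : ℕ → Set Cantor := fun m => {x | ∃ y ∈ C, ∀ i < m, x i = y i}
  let T : (m : ℕ) → Finset (Fin m → ZMod 2) := fun m =>
    Finset.univ.filter fun a => ∃ y ∈ C, (fun i : Fin m => y i) = a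
  have hE : ∀ m, E m = ⋃ a ∈ T m, cyl (List.ofFn a) := by
    intro m
    ext x
    simp only [E, T, Set.mem_ofPred_eq, Set.mem_iUnion, mem_cyl_ofFn, Finset.mem_filter,
      Finset.mem_univ, true_and, exists_prop]
    constructor
    · rintro ⟨y, hy, h⟩
      exact ⟨_, ⟨y, hy, rfl⟩, funext fun i => h i i.2⟩
    · rintro ⟨a, ⟨y, hy, rfl⟩, h⟩
      exact ⟨y, hy, fun i hi => congrFun h ⟨i, hi⟩⟩
  have hEm : ∀ m, MeasurableSet (E m) := by
    intro m
    rw [hE]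
    exact Finset.measurableSet_biUnion _ fun a _ => measurableSet_cyl _
  have hCE : ∀ m, C ⊆ E m := fun m x hx => ⟨x, hx, fun _ _ => rfl⟩
  have hmu : ∀ m, μ (E m) = ∑ a ∈ T m, μ (cyl (List.ofFn a)) := by
    intro m
    rw [hE]
    refine measure_biUnion_finset ?_ fun a _ => measurableSet_cyl _
    intro a _ b _ hab
    refine Set.disjoint_left.2 fun x hx hx' => hab ?_
    rw [mem_cyl_ofFn] at hx hx'
    rw [← hx, hx']
  have hle : ∀ m, M ≤ m → μ C ≤ r * μ (E m) := by
    intro m hm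
    have h1 : C ⊆ ⋃ a ∈ T m, (cyl (List.ofFn a) ∩ C) := by
      intro x hx
      have := hCE m hx
      rw [hE] at this
      simp only [Set.mem_iUnion, Set.mem_inter_iff, exists_prop] at this ⊢
      obtain ⟨a, ha, h⟩ := this
      exact ⟨a, ha, h, hx⟩
    calc μ C ≤ μ (⋃ a ∈ T m, (cyl (List.ofFn a) ∩ C)) := measure_mono h1
      _ ≤ ∑ a ∈ T m, μ (cyl (List.ofFn a) ∩ C) := measure_biUnion_finset_le _ _
      _ ≤ ∑ a ∈ T m, r * μ (cyl (List.ofFn a)) := by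
        refine Finset.sum_le_sum fun a _ => ?_
        rw [measure_cyl_inter μ hHaar hprob C hC.measurableSet, mul_comm]
        gcongr
        exact hcon _ (by simpa using hm)
      _ = r * μ (E m) := by rw [hmu, Finset.mul_sum]
  have hanti : Antitone E := by
    intro m n hmn x hx
    obtain ⟨y, hy, h⟩ := hx
    exact ⟨y, hy, fun i hi => h i (lt_of_lt_of_le hi hmn)⟩
  have hInter : ⋂ m, E m = C := by
    refine Set.Subset.antisymm ?_ (Set.subset_iInter hCE)
    intro x hx
    rw [Set.mem_iInter] at hx
    choose y hy hxy using hx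
    refine hC.mem_of_tendsto (f := y) (b := Filter.atTop) ?_ (Filter.Eventually.of_forall hy)
    rw [tendsto_pi_nhds]
    intro i
    refine tendsto_const_nhds.congr' ?_
    filter_upwards [Filter.eventually_gt_atTop i] with m hm
    exact hxy m i hm
  have hlim := tendsto_measure_iInter_atTop (μ := μ) (fun m => (hEm m).nullMeasurableSet) hanti
    ⟨0, measure_ne_top _ _⟩
  rw [hInter] at hlim
  have hlim2 := ENNReal.Tendsto.const_mul (a := r) hlim (Or.inr (ne_top_of_lt hr))
  have hfinal : μ C ≤ r * μ C := by
    refine ge_of_tendsto hlim2 ?_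
    filter_upwards [Filter.eventually_ge_atTop M] with m hm
    exact hle m hm
  have : r * μ C < 1 * μ C := ENNReal.mul_lt_mul_left hpos.ne' (measure_ne_top _ _) hr
  rw [one_mul] at this
  exact absurd hfinal (not_le.2 this)

lemma exists_M (q : ℕ) (c : ℝ) (hc : 0 < c) (hq : 1 / ((q : ℝ) + 1) ≤ c) :
    ∃ M : ℕ, c ≤ ∑ k ∈ Finset.range M, 1 / ((q : ℝ) + k + 1) ∧
      ∑ k ∈ Finset.range M, 1 / ((q : ℝ) + k + 1) ≤ 2 * c := by
  classical
  have hex : ∃ M : ℕ, c ≤ ∑ k ∈ Finset.range M, 1 / ((q : ℝ) + k + 1) := by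
    have h := Real.tendsto_sum_range_one_div_nat_succ_atTop
    obtain ⟨N, hN⟩ := ((h.eventually_ge_atTop
      (c + ∑ i ∈ Finset.range q, 1 / ((i : ℝ) + 1))).and (Filter.eventually_ge_atTop q)).exists
    obtain ⟨h1, h2⟩ := hN
    obtain ⟨M, rfl⟩ := Nat.exists_eq_add_of_le h2
    refine ⟨M, ?_⟩
    rw [Finset.sum_range_add] at h1
    push_cast at h1
    linarith
  refine ⟨Nat.find hex, Nat.find_spec hex, ?_⟩
  rcases hM : Nat.find hex with _ | m
  · simp; exact hc.le
  · have h1 : ¬ c ≤ ∑ k ∈ Finset.range m, 1 / ((q : ℝ) + k + 1) :=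
      Nat.find_min hex (by omega)
    rw [Finset.sum_range_succ]
    have h2 : 1 / ((q : ℝ) + m + 1) ≤ 1 / ((q : ℝ) + 1) := by
      apply one_div_le_one_div_of_le
      · positivity
      · have : (0 : ℝ) ≤ m := by positivity
        linarith
    linarith

lemma key_step (μ : Measure Cantor) (hHaar : μ.IsAddHaarMeasure)
    (hprob : IsProbabilityMeasure μ) (B : Set Cantor) (hB : IsClosed B) (hpos : 0 < μ B)
    (r : ℝ≥0∞) (hr : r < 1) (q : ℕ) (c : ℝ) (hc : 0 < c) (hq : 1 / ((q : ℝ) + 1) ≤ c) :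
    ∃ g : ZMod 2 → List (ZMod 2), (g 0).length = (g 1).length ∧ 0 < (g 0).length ∧
      (∀ i, r < μ (localization B (g i))) ∧
      c ≤ (∑ k ∈ Finset.range (g 0).length,
        if (g 0).getD k 0 = (g 1).getD k 0 then (0 : ℝ) else 1 / ((q : ℝ) + (k : ℝ) + 1)) ∧
      (∑ k ∈ Finset.range (g 0).length,
        if (g 0).getD k 0 = (g 1).getD k 0 then (0 : ℝ) else 1 / ((q : ℝ) + (k : ℝ) + 1))
        ≤ 2 * c := by
  classical
  obtain ⟨u, -, hu⟩ := density μ hHaar hprob B hB hpos (1 / 2)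
    (by simp) 0
  set B' := localization B u with hB'
  have hB'c : IsClosed B' := isClosed_localization hB u
  obtain ⟨M, hM1, hM2⟩ := exists_M (q + u.length) c hc (by
    refine le_trans (one_div_le_one_div_of_le (by positivity) ?_) hq
    push_cast
    have : (0 : ℝ) ≤ u.length := by positivity
    linarith)
  let z : Cantor := fun k => if k < M then 1 else 0
  let C := B' ∩ (fun x => z + x) ⁻¹' B'
  have hCc : IsClosed C := hB'c.inter (hB'c.preimage (continuous_const_add z))
  have hCpos : 0 < μ C := by
    rw [pos_iff_ne_zero]
    intro h0
    have h1 := measure_union_add_inter (μ := μ) B'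
      ((hB'c.preimage (continuous_const_add z)).measurableSet)
    rw [show B' ∩ (fun x => z + x) ⁻¹' B' = C from rfl, h0, measure_preimage_add, add_zero] at h1
    have h2 : μ (B' ∪ (fun x => z + x) ⁻¹' B') ≤ 1 := prob_le_one
    rw [h1] at h2
    have h3 : (1 / 2 : ℝ≥0∞) + 1 / 2 < μ B' + μ B' := ENNReal.add_lt_add hu hu
    rw [ENNReal.add_halves] at h3
    exact absurd h2 (not_le.2 h3)
  obtain ⟨v, hv, hvr⟩ := density μ hHaar hprob C hCc hCpos r hr (M + 1)
  let w : List (ZMod 2) := List.ofFn fun k : Fin v.length => z k + v.getD k 0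
  have hwl : w.length = v.length := by simp [w]
  have hwg : ∀ k < v.length, w.getD k 0 = z k + v.getD k 0 := by
    intro k hk
    simp [w, hk]
  have hconc : ∀ x, concat w x = z + concat v x := by
    intro x
    funext k
    by_cases hk : k < v.length
    · simp only [concat, hwl, hk, if_true, Pi.add_apply, hwg k hk]
    · have : ¬ k < M := by omega
      simp [concat, hwl, hk, z, this]
  have hsum : (∑ k ∈ Finset.range (u ++ v).length,
      if (u ++ v).getD k 0 = (u ++ w).getD k 0 then (0 : ℝ) else 1 / ((q : ℝ) + (k : ℝ) + 1))
      = ∑ k ∈ Finset.range M, 1 / (((q + u.length : ℕ) : ℝ) + k + 1) := by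
    rw [List.length_append, Finset.sum_range_add, Finset.sum_eq_zero, zero_add]
    · have hsplit : v.length = M + (v.length - M) := by omega
      rw [hsplit, Finset.sum_range_add, Finset.sum_eq_zero (s := Finset.range (v.length - M)),
        add_zero]
      · refine Finset.sum_congr rfl fun k hk => ?_
        have hk' : k < M := Finset.mem_range.1 hk
        rw [List.getD_append_right _ _ _ _ (by omega), List.getD_append_right _ _ _ _ (by omega),
          Nat.add_sub_cancel_left, hwg k (by omega), if_neg]
        · push_cast; ring_nf
        · simp [z, hk']
      · intro k hk
        have hk' : k < v.length - M := Finset.mem_range.1 hk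
        rw [List.getD_append_right _ _ _ _ (by omega), List.getD_append_right _ _ _ _ (by omega),
          Nat.add_sub_cancel_left, hwg _ (by omega), if_pos]
        simp [z]
    · intro k hk
      have hk' : k < u.length := Finset.mem_range.1 hk
      rw [List.getD_append _ _ _ _ hk', List.getD_append _ _ _ _ hk', if_pos rfl]
  refine ⟨fun i => if i = 0 then u ++ v else u ++ w, ?_⟩
  have h10 : (1 : ZMod 2) ≠ 0 := by decide
  simp only [if_true, h10, if_false]
  refine ⟨by simp [hwl], by simp; omega, ?_, by rw [hsum]; exact hM1, by rw [hsum]; exact hM2⟩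
  intro i
  split_ifs
  · rw [localization_append]
    exact hvr.trans_le (measure_mono fun x hx => hx.1)
  · rw [localization_append]
    refine hvr.trans_le (measure_mono fun x hx => ?_)
    have : z + concat v x ∈ B' := hx.2
    rw [← hconc] at this
    exact this

/-- invariant at level `n` -/
def LevelOK (μ : Measure Cantor) (A : Set Cantor) (n : ℕ)
    (f : List (ZMod 2) → List (ZMod 2)) : Prop :=
  ∃ q : ℕ, n ≤ q ∧ ∀ t : List (ZMod 2), t.length = n →
    (f t).length = q ∧ μ (localization A (f t)) > 1 - (1 / 2) ^ n

/-- the extension requirement -/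
def StepOK (μ : Measure Cantor) (A : Set Cantor) (n : ℕ)
    (f : List (ZMod 2) → List (ZMod 2)) (g : ZMod 2 → List (ZMod 2)) : Prop :=
  (g 0).length = (g 1).length ∧ 0 < (g 0).length ∧
  (∀ t : List (ZMod 2), t.length = n → ∀ i,
    μ (localization A (f t ++ g i)) > 1 - (1 / 2) ^ (n + 1)) ∧
  (1 : ℝ) / (n + 1) ≤ (∑ k ∈ Finset.range (g 0).length,
    if (g 0).getD k 0 = (g 1).getD k 0 then (0 : ℝ)
      else 1 / (((f (List.replicate n 0)).length : ℝ) + (k : ℝ) + 1)) ∧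
  (∑ k ∈ Finset.range (g 0).length,
    if (g 0).getD k 0 = (g 1).getD k 0 then (0 : ℝ)
      else 1 / (((f (List.replicate n 0)).length : ℝ) + (k : ℝ) + 1)) ≤ 2 / (n + 1)

lemma exists_stepOK (μ : Measure Cantor) (hHaar : μ.IsAddHaarMeasure)
    (hprob : IsProbabilityMeasure μ) (A : Set Cantor) (hA : IsClosed A) (n : ℕ)
    (f : List (ZMod 2) → List (ZMod 2)) (hf : LevelOK μ A n f) : ∃ g, StepOK μ A n f g := by
  obtain ⟨q, hnq, hq⟩ := hf
  let B : Set Cantor := ⋂ a : Fin n → ZMod 2, localization A (f (List.ofFn a))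
  have hBc : IsClosed B := isClosed_iInter fun a => isClosed_localization hA _
  have hBpos : 0 < μ B := by
    have h1 : μ Bᶜ < 1 := by
      have h2 : Bᶜ = ⋃ a : Fin n → ZMod 2, (localization A (f (List.ofFn a)))ᶜ := by
        simp [B, Set.compl_iInter]
      calc μ Bᶜ ≤ ∑ a : Fin n → ZMod 2, μ (localization A (f (List.ofFn a)))ᶜ := by
            rw [h2]; exact measure_iUnion_fintype_le _ _
        _ < ∑ a : Fin n → ZMod 2, (1 / 2 : ℝ≥0∞) ^ n := by
            refine ENNReal.sum_lt_sum_of_nonempty Finset.univ_nonempty fun a _ => ?_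
            rw [prob_compl_eq_one_sub (isClosed_localization hA _).measurableSet]
            have h3 := (hq (List.ofFn a) (by simp)).2
            have hp : (1 / 2 : ℝ≥0∞) ^ n ≤ 1 := pow_le_one₀ (by simp) (by simp)
            rw [gt_iff_lt, ENNReal.sub_lt_iff_lt_right (ne_top_of_le_ne_top ENNReal.one_ne_top hp) hp] at h3
            exact ENNReal.sub_lt_of_lt_add prob_le_one (by rwa [add_comm] at h3)
        _ = 1 := by
            simp only [Finset.sum_const, Finset.card_univ, Fintype.card_pi, ZMod.card,
              Finset.prod_const, Fintype.card_fin, nsmul_eq_mul]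
            push_cast
            rw [← mul_pow, one_div, ENNReal.mul_inv_cancel (by simp) (by simp), one_pow]
    rw [pos_iff_ne_zero]
    intro h0
    rw [prob_compl_eq_one_sub hBc.measurableSet, h0] at h1
    simp at h1
  have hlt : (1 : ℝ≥0∞) - (1 / 2) ^ (n + 1) < 1 := by
    refine ENNReal.sub_lt_self (by simp) (by simp) ?_
    exact pow_ne_zero _ (by simp)
  obtain ⟨g, h1, h2, h3, h4, h5⟩ := key_step μ hHaar hprob B hBc hBpos _ hlt q (1 / (n + 1))
    (by positivity) (one_div_le_one_div_of_le (by positivity) (by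
      have : (n : ℝ) ≤ q := by exact_mod_cast hnq
      linarith))
  have hlen := (hq (List.replicate n 0) (by simp)).1
  refine ⟨g, h1, h2, ?_, by rw [hlen]; exact h4, by rw [hlen]; refine h5.trans_eq (by ring)⟩
  intro t ht i
  refine (h3 i).trans_le (measure_mono ?_)
  rw [localization_append]
  subst ht
  intro x hx
  have := Set.mem_iInter.1 hx (fun i => t.get i)
  rwa [List.ofFn_get] at this

lemma level_succ (μ : Measure Cantor) (A : Set Cantor) (n : ℕ)
    (f : List (ZMod 2) → List (ZMod 2)) (hf : LevelOK μ A n f) (g : ZMod 2 → List (ZMod 2))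
    (hg : StepOK μ A n f g) :
    LevelOK μ A (n + 1) (fun t => f t.dropLast ++ g (t.getLastD 0)) := by
  obtain ⟨q, hnq, hq⟩ := hf
  obtain ⟨h1, h2, h3, -, -⟩ := hg
  refine ⟨q + (g 0).length, by omega, ?_⟩
  intro t ht
  have hd : t.dropLast.length = n := by simp [ht]
  refine ⟨?_, h3 _ hd _⟩
  have hgl : ∀ i, (g i).length = (g 0).length := by
    intro i
    fin_cases i
    · rfl
    · exact h1.symm
  simp [(hq _ hd).1, hgl]

theorem exists_scheme_of_closed_pos_measure
    (μ : Measure Cantor) (hHaar : μ.IsAddHaarMeasure) (hprob : IsProbabilityMeasure μ)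
    (A : Set Cantor) (hA : IsClosed A) (hpos : 0 < μ A) :
    ∃ (q : ℕ → ℕ) (s2 : ℕ → ZMod 2 → List (ZMod 2)) (st : List (ZMod 2) → List (ZMod 2)),
      -- (1)
      q 0 = 0 ∧
      (∀ n : ℕ, ∀ t : List (ZMod 2), t.length = n → q (n + 1) = (st t).length) ∧
      -- (2)
      (s2 0 0 = [] ∧ s2 0 1 = []) ∧
      (∀ n : ℕ, 0 < n → (s2 n 0).length = (s2 n 1).length ∧ 0 < (s2 n 0).length) ∧
      -- (3)
      st [] = [] ∧
      (∀ (t : List (ZMod 2)) (i : ZMod 2), st (t ++ [i]) = st t ++ s2 (t.length + 1) i) ∧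
      -- (4)
      (∀ n : ℕ,
        (1 : ℝ) / (n + 1) ≤
          (∑ k ∈ Finset.range (s2 (n + 1) 0).length,
            if (s2 (n + 1) 0).getD k 0 = (s2 (n + 1) 1).getD k 0 then (0 : ℝ)
            else 1 / ((q (n + 1) : ℝ) + (k : ℝ) + 1)) ∧
        (∑ k ∈ Finset.range (s2 (n + 1) 0).length,
            if (s2 (n + 1) 0).getD k 0 = (s2 (n + 1) 1).getD k 0 then (0 : ℝ)
            else 1 / ((q (n + 1) : ℝ) + (k : ℝ) + 1)) ≤ 2 / (n + 1)) ∧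
      -- (5)
      (∀ t : List (ZMod 2), (cyl (st t) ∩ A).Nonempty) ∧
      -- (6)
      (∀ n : ℕ, ∀ t : List (ZMod 2), t.length = n →
        μ (localization A (st t)) > 1 - (1 / 2) ^ n) := by
  classical
  choose G hG using exists_stepOK μ hHaar hprob A hA
  let F : (n : ℕ) → {f : List (ZMod 2) → List (ZMod 2) // LevelOK μ A n f} := fun n =>
    Nat.rec (motive := fun n => {f : List (ZMod 2) → List (ZMod 2) // LevelOK μ A n f})
      ⟨fun _ => [], 0, le_refl 0, fun t _ => ⟨rfl, by
        have : localization A [] = A := by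
          have h0 : ∀ x, concat [] x = x := fun x => by funext n; simp [concat]
          ext x; simp [localization, h0]
        rw [this]; simpa using hpos⟩⟩
      (fun n f => ⟨_, level_succ μ A n f.1 f.2 (G n f.1 f.2) (hG n f.1 f.2)⟩) n
  have hF0 : (F 0).1 = fun _ => [] := rfl
  have hFs : ∀ n, (F (n + 1)).1 =
      fun t => (F n).1 t.dropLast ++ G n (F n).1 (F n).2 (t.getLastD 0) := fun n => rfl
  have hmeas : ∀ n : ℕ, ∀ t : List (ZMod 2), t.length = n →
      μ (localization A ((F t.length).1 t)) > 1 - (1 / 2) ^ n := by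
    rintro n t rfl
    obtain ⟨q, -, hq⟩ := (F t.length).2
    exact (hq t rfl).2
  refine ⟨fun n => Nat.casesOn n 0 fun m => ((F m).1 (List.replicate m 0)).length,
    fun n => Nat.casesOn n (fun _ => []) fun m => G m (F m).1 (F m).2,
    fun t => (F t.length).1 t, rfl, ?_, ⟨rfl, rfl⟩, ?_, rfl, ?_, ?_, ?_, hmeas⟩
  · rintro n t rfl
    obtain ⟨q, -, hq⟩ := (F t.length).2
    exact (hq _ (by simp)).1.trans (hq t rfl).1.symm
  · intro n hn
    obtain ⟨m, rfl⟩ : ∃ m, n = m + 1 := ⟨n - 1, by omega⟩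
    have h := hG m (F m).1 (F m).2
    exact ⟨h.1, h.2.1⟩
  · intro t i
    have : (t ++ [i]).length = t.length + 1 := by simp
    have h2 : (F (t ++ [i]).length).1 (t ++ [i]) = (F (t.length + 1)).1 (t ++ [i]) := by
      rw [this]
    refine h2.trans ?_
    rw [hFs]
    simp
  · intro n
    have h := hG n (F n).1 (F n).2
    exact h.2.2.2
  · intro t
    have h := hmeas _ t rfl
    have hne : (localization A ((F t.length).1 t)).Nonempty := by
      rw [Set.nonempty_iff_ne_empty]
      intro h0
      rw [h0] at h
      simp at h
    obtain ⟨x, hx⟩ := hne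
    refine ⟨concat ((F t.length).1 t) x, ?_, hx⟩
    intro i hi
    simp only [concat, hi, if_true]
end

section
/- Let μ denote the Haar probability measure on 2^ω. For every Borel set B ⊆ 2^ω with μ(B) > 0, every q ∈ ℕ and every real c > 0, there exist x₀, x₁ ∈ B such that c ≤ Σ_{k=0}^∞ |x₀(k) − x₁(k)|/(q+k+1) ≤ 2c. -/
open MeasureTheory
open scoped ENNReal

theorem aux_interval (q M : ℕ) (c : ℝ) (hc : 0 < c) :
    ∃ n : ℕ, c ≤ ∑ k ∈ Finset.Ico M n, 1 / ((q : ℝ) + k + 1) ∧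
      ∑ k ∈ Finset.Ico M n, 1 / ((q : ℝ) + k + 1) ≤ c + 1 / ((q : ℝ) + M + 1) := by
  classical
  have hex : ∃ n : ℕ, c ≤ ∑ k ∈ Finset.Ico M n, 1 / ((q : ℝ) + k + 1) := by
    have h := Real.tendsto_sum_range_one_div_nat_succ_atTop
    obtain ⟨n, hn, hnM⟩ := ((h.eventually_ge_atTop
      (c + ∑ i ∈ Finset.range (q + M), 1 / ((i : ℝ) + 1))).and
      (Filter.eventually_ge_atTop (q + M))).exists
    refine ⟨n - q, ?_⟩
    have h1 : ∑ k ∈ Finset.Ico M (n - q), 1 / ((q : ℝ) + k + 1)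
        = ∑ k ∈ Finset.Ico (q + M) n, 1 / ((k : ℝ) + 1) := by
      have := Finset.sum_Ico_add (fun k : ℕ => 1 / ((k : ℝ) + 1)) M (n - q) q
      rw [show n - q + q = n by omega, Nat.add_comm M q] at this
      rw [← this]
      apply Finset.sum_congr rfl
      intro k _
      push_cast
      ring_nf
    rw [h1, Finset.sum_Ico_eq_sub _ hnM]
    linarith
  refine ⟨Nat.find hex, Nat.find_spec hex, ?_⟩
  have hs := Nat.find_spec hex
  have hm : ∀ m, m < Nat.find hex → _ := fun m hm => Nat.find_min hex hm
  generalize Nat.find hex = n at hs hm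
  rcases Nat.lt_or_ge M n with h | h
  · obtain ⟨m, rfl⟩ : ∃ m, n = m + 1 := ⟨n - 1, by omega⟩
    have h1 := hm m (by omega)
    rw [Finset.sum_Ico_succ_top (by omega)]
    have h2 : 1 / ((q : ℝ) + m + 1) ≤ 1 / ((q : ℝ) + M + 1) := by
      have : (M : ℝ) ≤ m := by exact_mod_cast (by omega : M ≤ m)
      apply one_div_le_one_div_of_le <;> [positivity; linarith]
    push Not at h1
    linarith
  · rw [Finset.Ico_eq_empty (by omega)] at hs
    simp at hs
    linarith

/-- for every Borel `B ⊆ 2^ω` of positive Haar measure, every `q ∈ ℕ` and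
every real `c > 0` there are `x₀, x₁ ∈ B` with
`c ≤ Σ_k |x₀(k) - x₁(k)|/(q+k+1) ≤ 2c` (the sum computed in `[0,∞]`). -/
theorem exists_pair_in_pos_measure_with_sum_between
    (μ : Measure Cantor) (hHaar : μ.IsAddHaarMeasure) (hprob : IsProbabilityMeasure μ)
    (B : Set Cantor) (hB : MeasurableSet B) (hpos : 0 < μ B) (q : ℕ) (c : ℝ) (hc : 0 < c) :
    ∃ x₀ ∈ B, ∃ x₁ ∈ B,
      ENNReal.ofReal c ≤
        (∑' k : ℕ, if x₀ k = x₁ k then 0 else 1 / ((q : ℝ≥0∞) + (k : ℝ≥0∞) + 1)) ∧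
      (∑' k : ℕ, if x₀ k = x₁ k then 0 else 1 / ((q : ℝ≥0∞) + (k : ℝ≥0∞) + 1)) ≤
        ENNReal.ofReal (2 * c) := by
  have hnhds := Measure.sub_mem_nhds_zero_of_addHaar_pos μ B hB hpos
  choose n hn1 hn2 using fun M => aux_interval q M c hc
  let z : ℕ → Cantor := fun M k => if k ∈ Finset.Ico M (n M) then 1 else 0
  have hz : Filter.Tendsto z Filter.atTop (nhds 0) := by
    rw [tendsto_pi_nhds]
    intro k
    apply tendsto_const_nhds.congr'
    filter_upwards [Filter.eventually_gt_atTop k] with M hM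
    simp only [z, Finset.mem_Ico, Pi.zero_apply]
    rw [if_neg (by omega)]
  obtain ⟨K, hK⟩ := exists_nat_one_div_lt hc
  obtain ⟨M, hM, hMK⟩ := ((hz.eventually_mem hnhds).and
    (Filter.eventually_ge_atTop K)).exists
  obtain ⟨x₀, h₀, x₁, h₁, hx⟩ := Set.mem_sub.1 hM
  refine ⟨x₀, h₀, x₁, h₁, ?_⟩
  have hsum : (∑' k : ℕ, if x₀ k = x₁ k then 0 else 1 / ((q : ℝ≥0∞) + (k : ℝ≥0∞) + 1))
      = ENNReal.ofReal (∑ k ∈ Finset.Ico M (n M), 1 / ((q : ℝ) + k + 1)) := by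
    have hk : ∀ k, x₀ k = x₁ k ↔ k ∉ Finset.Ico M (n M) := by
      intro k
      have := congrFun hx k
      rw [← sub_eq_zero, ← Pi.sub_apply, this]
      by_cases h : k ∈ Finset.Ico M (n M) <;> simp only [z, h] <;> simp
    rw [tsum_eq_sum (s := Finset.Ico M (n M)) (fun k h => if_pos ((hk k).2 h)),
      ENNReal.ofReal_sum_of_nonneg (fun k _ => by positivity)]
    apply Finset.sum_congr rfl
    intro k h
    rw [if_neg (fun h' => (hk k).1 h' h), ENNReal.ofReal_div_of_pos (by positivity),
      ENNReal.ofReal_add (by positivity) (by positivity),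
      ENNReal.ofReal_add (by positivity) (by positivity)]
    simp
  rw [hsum]
  refine ⟨ENNReal.ofReal_le_ofReal (hn1 M), ENNReal.ofReal_le_ofReal ((hn2 M).trans ?_)⟩
  have h2 : 1 / ((q : ℝ) + M + 1) ≤ 1 / ((K : ℝ) + 1) := by
    have : (K : ℝ) ≤ M := by exact_mod_cast hMK
    have : (0 : ℝ) ≤ q := by positivity
    apply one_div_le_one_div_of_le <;> [positivity; linarith]
  linarith
end
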